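/- Let v_1 ≥ v_2 ≥ ⋯ ≥ v_n ≥ 0 with v_1 > 0. Let C = { WTP({i,…,j}) : 1 ≤ i ≤ j ≤ n } be the set of willingness-to-pay values of all consecutive-index intervals, and for CV ∈ C with CV > 0 let k(CV) be the number of subgroups closed by the greedy procedure with threshold CV. Then opt_WTP = max_{CV ∈ C, CV > 0} k(CV)·CV. Moreover, for a maximizing CV, the grouping {Ĝ^1,…,Ĝ^{k−1}, Ĝ^k ∪ Ĝ^{k+1}} (the k closed greedy subgroups with the leftover tail Ĝ^{k+1} merged into the last one) is a continuous grouping whose total willingness to pay equals opt_WTP. -/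

import Mathlib

open scoped Classical

noncomputable section

/-- The willingness to pay of a subgroup `S` of members, where `v` lists the members'
valuations (non-increasing in the index): `WTP(S) = max_{1 ≤ i ≤ |S|} i · w_i`, where
`w_1 ≥ ⋯ ≥ w_m` are the valuations of the members of `S` in non-increasing order.
Since `v` is non-increasing, the rank of member `a` in `S` is `|{c ∈ S : c ≤ a}|`. -/
def WTP (v : ℕ → ℝ) (S : Finset ℕ) : ℝ :=
  sSup ((fun a => ((S.filter (fun c => c ≤ a)).card : ℝ) * v a) '' (S : Set ℕ))

/-- The total willingness to pay of a grouping `𝒢`: listing the subgroup values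
non-increasingly as `W_1 ≥ ⋯ ≥ W_k`, it is `max_{1 ≤ j ≤ k} j · W_j`.  Equivalently,
it is the max over `G ∈ 𝒢` of `|{G' ∈ 𝒢 : WTP(G') ≥ WTP(G)}| · WTP(G)`. -/
def WTPtotal (v : ℕ → ℝ) (𝒢 : Finset (Finset ℕ)) : ℝ :=
  sSup ((fun G => ((𝒢.filter (fun G' => WTP v G ≤ WTP v G')).card : ℝ) * WTP v G) ''
    (𝒢 : Set (Finset ℕ)))

/-- `𝒢` is a grouping of the members `{1, …, n}`: a partition into nonempty subgroups. -/
def IsGrouping (n : ℕ) (𝒢 : Finset (Finset ℕ)) : Prop :=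
  (∀ G ∈ 𝒢, G.Nonempty) ∧
  (𝒢 : Set (Finset ℕ)).PairwiseDisjoint id ∧
  𝒢.sup id = Finset.Icc 1 n

/-- A grouping is continuous if every subgroup is a set of consecutive indices. -/
def ContinuousGrouping (𝒢 : Finset (Finset ℕ)) : Prop :=
  ∀ G ∈ 𝒢, ∀ a ∈ G, ∀ c ∈ G, ∀ b, a ≤ b → b ≤ c → b ∈ G

/-- `GreedyBoundaries v n CV k N` says that the greedy procedure with threshold `CV`,
scanning members `1, …, n` (with valuations `v_1 ≥ ⋯ ≥ v_n`) in order, closes exactly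
`k` subgroups, the `j`-th closed subgroup being `Ĝ^j = {N_{j-1}+1, …, N_j}`:
a subgroup is closed the first time its size `s` and last-added member `i`
satisfy `s · v_i ≥ CV`, and the members after `N_k` never close a subgroup
(the leftover tail is `Ĝ^{k+1} = {N_k + 1, …, n}`). -/
def GreedyBoundaries (v : ℕ → ℝ) (n : ℕ) (CV : ℝ) (k : ℕ) (N : ℕ → ℕ) : Prop :=
  N 0 = 0 ∧
  (∀ j, 1 ≤ j → j ≤ k →
    N (j - 1) < N j ∧ N j ≤ n ∧
    CV ≤ ((N j - N (j - 1) : ℕ) : ℝ) * v (N j) ∧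
    (∀ i, N (j - 1) < i → i < N j → ((i - N (j - 1) : ℕ) : ℝ) * v i < CV)) ∧
  (∀ i, N k < i → i ≤ n → ((i - N k : ℕ) : ℝ) * v i < CV)

lemma le_WTP (v : ℕ → ℝ) {S : Finset ℕ} {a : ℕ} (ha : a ∈ S) :
    ((S.filter (fun c => c ≤ a)).card : ℝ) * v a ≤ WTP v S :=
  le_csSup (S.finite_toSet.image _).bddAbove ⟨a, ha, rfl⟩

lemma exists_WTP_eq (v : ℕ → ℝ) {S : Finset ℕ} (hS : S.Nonempty) :
    ∃ a ∈ S, WTP v S = ((S.filter (fun c => c ≤ a)).card : ℝ) * v a := by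
  obtain ⟨a, ha, h⟩ := Set.Nonempty.csSup_mem
    (hS.to_set.image (fun a => ((S.filter (fun c => c ≤ a)).card : ℝ) * v a))
    (S.finite_toSet.image _)
  exact ⟨a, ha, h.symm⟩

lemma le_WTP_Icc (v : ℕ → ℝ) {p c q : ℕ} (hpc : p < c) (hcq : c ≤ q) :
    ((c - p : ℕ) : ℝ) * v c ≤ WTP v (Finset.Icc (p + 1) q) := by
  have h := le_WTP v (S := Finset.Icc (p + 1) q) (a := c) (Finset.mem_Icc.2 ⟨hpc, hcq⟩)
  have hf : (Finset.Icc (p + 1) q).filter (fun x => x ≤ c) = Finset.Icc (p + 1) c := by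
    ext x
    simp only [Finset.mem_filter, Finset.mem_Icc]
    omega
  rw [hf, Nat.card_Icc] at h
  simpa using h

lemma le_WTPtotal (v : ℕ → ℝ) {𝒢 : Finset (Finset ℕ)} {CV : ℝ} (hne : 𝒢.Nonempty)
    (h : ∀ G ∈ 𝒢, CV ≤ WTP v G) : (𝒢.card : ℝ) * CV ≤ WTPtotal v 𝒢 := by
  obtain ⟨G, hG, hmin⟩ := 𝒢.exists_min_image (WTP v) hne
  have hle : ((𝒢.filter (fun G' => WTP v G ≤ WTP v G')).card : ℝ) * WTP v G ≤ WTPtotal v 𝒢 :=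
    le_csSup (𝒢.finite_toSet.image _).bddAbove ⟨G, hG, rfl⟩
  rw [Finset.filter_true_of_mem hmin] at hle
  exact (mul_le_mul_of_nonneg_left (h G hG) (Nat.cast_nonneg _)).trans hle

lemma exists_WTPtotal_eq (v : ℕ → ℝ) {𝒢 : Finset (Finset ℕ)} (hne : 𝒢.Nonempty) :
    ∃ G ∈ 𝒢, WTPtotal v 𝒢 =
      ((𝒢.filter (fun G' => WTP v G ≤ WTP v G')).card : ℝ) * WTP v G := by
  obtain ⟨G, hG, h⟩ := Set.Nonempty.csSup_mem
    (hne.to_set.image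
      (fun G => ((𝒢.filter (fun G' => WTP v G ≤ WTP v G')).card : ℝ) * WTP v G))
    (𝒢.finite_toSet.image _)
  exact ⟨G, hG, h.symm⟩

/-- The intervals `{M_{j-1}+1, …, M_j}` for `1 ≤ j ≤ k`. -/
def intervalFamily (M : ℕ → ℕ) (k : ℕ) : Finset (Finset ℕ) :=
  (Finset.Icc 1 k).image (fun j => Finset.Icc (M (j - 1) + 1) (M j))

lemma mem_intervalFamily {M : ℕ → ℕ} {k : ℕ} {G : Finset ℕ} :
    G ∈ intervalFamily M k ↔
      ∃ j, 1 ≤ j ∧ j ≤ k ∧ Finset.Icc (M (j - 1) + 1) (M j) = G := by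
  simp [intervalFamily, and_assoc]

lemma boundary_mono {M : ℕ → ℕ} {k : ℕ} (hM : ∀ j, 1 ≤ j → j ≤ k → M (j - 1) < M j)
    {i j : ℕ} (hij : i ≤ j) (hj : j ≤ k) : M i ≤ M j := by
  induction j, hij using Nat.le_induction with
  | base => exact le_rfl
  | succ j _ ih => exact (ih (by omega)).trans (hM (j + 1) (by omega) hj).le

lemma disjoint_boundary_intervals {M : ℕ → ℕ} {k : ℕ}
    (hM : ∀ j, 1 ≤ j → j ≤ k → M (j - 1) < M j) {i j : ℕ} (hij : i < j) (hj : j ≤ k) :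
    Disjoint (Finset.Icc (M (i - 1) + 1) (M i)) (Finset.Icc (M (j - 1) + 1) (M j)) := by
  rw [Finset.disjoint_left]
  intro x hx hy
  have := boundary_mono hM (i := i) (j := j - 1) (by omega) (by omega)
  simp only [Finset.mem_Icc] at hx hy
  omega

lemma pairwiseDisjoint_intervalFamily {M : ℕ → ℕ} {k : ℕ}
    (hM : ∀ j, 1 ≤ j → j ≤ k → M (j - 1) < M j) :
    (intervalFamily M k : Set (Finset ℕ)).PairwiseDisjoint id := by
  intro G hG H hH hne
  obtain ⟨i, -, hi, rfl⟩ := mem_intervalFamily.1 hG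
  obtain ⟨j, -, hj, rfl⟩ := mem_intervalFamily.1 hH
  rcases lt_trichotomy i j with h | rfl | h
  · exact disjoint_boundary_intervals hM h hj
  · exact absurd rfl hne
  · exact (disjoint_boundary_intervals hM h hi).symm

lemma card_intervalFamily {M : ℕ → ℕ} {k : ℕ}
    (hM : ∀ j, 1 ≤ j → j ≤ k → M (j - 1) < M j) : (intervalFamily M k).card = k := by
  rw [intervalFamily, Finset.card_image_of_injOn, Nat.card_Icc, Nat.add_sub_cancel]
  have hlt : ∀ i j, 1 ≤ i → i < j → j ≤ k →
      Finset.Icc (M (i - 1) + 1) (M i) ≠ Finset.Icc (M (j - 1) + 1) (M j) := by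
    intro i j hi hij hj h
    have hd := disjoint_boundary_intervals hM hij hj
    rw [← h, disjoint_self, Finset.bot_eq_empty, Finset.Icc_eq_empty_iff] at hd
    exact hd (hM i hi (by omega))
  intro i hi j hj h
  simp only [Finset.coe_Icc, Set.mem_Icc] at hi hj
  rcases lt_trichotomy i j with hij | hij | hij
  · exact absurd h (hlt i j hi.1 hij hj.2)
  · exact hij
  · exact absurd h.symm (hlt j i hj.1 hij hi.2)

lemma continuousGrouping_intervalFamily (M : ℕ → ℕ) (k : ℕ) :
    ContinuousGrouping (intervalFamily M k) := by
  intro G hG a ha c hc b hab hbc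
  obtain ⟨j, -, -, rfl⟩ := mem_intervalFamily.1 hG
  simp only [Finset.mem_Icc] at *
  omega

lemma isGrouping_intervalFamily {M : ℕ → ℕ} {k : ℕ}
    (hM : ∀ j, 1 ≤ j → j ≤ k → M (j - 1) < M j) (h0 : M 0 = 0) :
    IsGrouping (M k) (intervalFamily M k) := by
  refine ⟨?_, pairwiseDisjoint_intervalFamily hM, ?_⟩
  · intro G hG
    obtain ⟨j, h1, hj, rfl⟩ := mem_intervalFamily.1 hG
    exact Finset.nonempty_Icc.2 (hM j h1 hj)
  · ext x
    simp only [Finset.mem_sup, id_eq, mem_intervalFamily, Finset.mem_Icc]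
    constructor
    · rintro ⟨G, ⟨j, h1, hj, rfl⟩, hx⟩
      have := boundary_mono hM hj le_rfl
      simp only [Finset.mem_Icc] at hx
      omega
    · rintro ⟨h1, hx⟩
      have hex : ∃ j, x ≤ M j := ⟨k, hx⟩
      have hpos : Nat.find hex ≠ 0 := by
        intro h
        have := Nat.find_spec hex
        rw [h, h0] at this
        omega
      have hlow : ¬ x ≤ M (Nat.find hex - 1) := Nat.find_min hex (by omega)
      exact ⟨_, ⟨Nat.find hex, by omega, Nat.find_min' hex hx, rfl⟩,
        Finset.mem_Icc.2 ⟨by omega, Nat.find_spec hex⟩⟩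

lemma exists_greedyBoundaries (v : ℕ → ℝ) (n : ℕ) (CV : ℝ) :
    ∃ k N, GreedyBoundaries v n CV k N := by
  let P : ℕ → Prop := fun k => ∃ N : ℕ → ℕ, N 0 = 0 ∧ ∀ j, 1 ≤ j → j ≤ k →
    N (j - 1) < N j ∧ N j ≤ n ∧ CV ≤ ((N j - N (j - 1) : ℕ) : ℝ) * v (N j) ∧
    (∀ i, N (j - 1) < i → i < N j → ((i - N (j - 1) : ℕ) : ℝ) * v i < CV)
  have hP0 : P 0 := ⟨fun _ => 0, rfl, fun j h1 h2 => by omega⟩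
  have hbound : ∀ k, P k → k ≤ n := by
    rintro k ⟨N, h0, hN⟩
    have hle : ∀ j, j ≤ k → j ≤ N j := by
      intro j
      induction j with
      | zero => intro _; omega
      | succ j ih =>
        intro hj
        have := (hN (j + 1) (by omega) hj).1
        have := ih (by omega)
        simp only [Nat.add_sub_cancel] at *
        omega
    rcases Nat.eq_zero_or_pos k with rfl | hk
    · omega
    · exact (hle k le_rfl).trans (hN k hk le_rfl).2.1
  set k := Nat.findGreatest P n with hk
  obtain ⟨N, h0, hN⟩ : P k := Nat.findGreatest_spec (P := P) (Nat.zero_le n) hP0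
  refine ⟨k, N, h0, hN, ?_⟩
  by_contra hcon
  push Not at hcon
  let i := Nat.find hcon
  obtain ⟨hi1, hi2, hi3⟩ : N k < i ∧ i ≤ n ∧ CV ≤ ((i - N k : ℕ) : ℝ) * v i := Nat.find_spec hcon
  have hsucc : P (k + 1) := by
    refine ⟨Function.update N (k + 1) i, ?_, ?_⟩
    · rw [Function.update_of_ne (by omega), h0]
    · intro j h1 hj
      rw [Function.update_of_ne (show j - 1 ≠ k + 1 by omega)]
      rcases Nat.lt_or_ge k j with hkj | hkj
      · obtain rfl : j = k + 1 := by omega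
        rw [Function.update_self, Nat.add_sub_cancel]
        refine ⟨hi1, hi2, hi3, fun l hl1 hl2 => ?_⟩
        by_contra hl
        exact Nat.find_min hcon hl2 ⟨hl1, by omega, not_lt.1 hl⟩
      · rw [Function.update_of_ne (show j ≠ k + 1 by omega)]
        exact hN j h1 hkj
  have := Nat.le_findGreatest (P := P) (hbound _ hsucc) hsucc
  omega

/-- The greedy procedure closes at least as many subgroups as any disjoint family
of subgroups willing to pay the threshold has members. -/
lemma card_le_of_greedyBoundaries {n : ℕ} {v : ℕ → ℝ}
    (hmono : ∀ i j, 1 ≤ i → i ≤ j → j ≤ n → v j ≤ v i)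
    (hnonneg : ∀ i, 1 ≤ i → i ≤ n → 0 ≤ v i)
    {CV : ℝ} {k : ℕ} {N : ℕ → ℕ} (hG : GreedyBoundaries v n CV k N)
    {F : Finset (Finset ℕ)} (hsub : ∀ G ∈ F, G.Nonempty ∧ G ⊆ Finset.Icc 1 n)
    (hdisj : (F : Set (Finset ℕ)).PairwiseDisjoint id) (hF : ∀ G ∈ F, CV ≤ WTP v G) :
    F.card ≤ k := by
  obtain ⟨h0, hN, htail⟩ := hG
  have hwit : ∀ G : Finset ℕ, ∃ a, G.Nonempty →
      a ∈ G ∧ WTP v G = ((G.filter (fun c => c ≤ a)).card : ℝ) * v a := by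
    intro G
    by_cases hne : G.Nonempty
    · obtain ⟨a, ha⟩ := exists_WTP_eq v hne
      exact ⟨a, fun _ => ha⟩
    · exact ⟨0, fun h => absurd h hne⟩
  choose a ha using hwit
  let s : Finset ℕ → Finset ℕ := fun G => G.filter (fun c => c ≤ a G)
  suffices h : F.card ≤ k ∧ N F.card ≤ ∑ G ∈ F, (s G).card from h.1
  induction F using Finset.induction_on_max_value a with
  | empty => simp [h0]
  | insert X F hX hmax ih =>
    obtain ⟨hk, hNF⟩ := ih (fun G hG => hsub G (Finset.mem_insert_of_mem hG))
      (hdisj.subset (by simp)) (fun G hG => hF G (Finset.mem_insert_of_mem hG))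
    obtain ⟨hXne, hXsub⟩ := hsub X (Finset.mem_insert_self _ _)
    obtain ⟨haX, hWX⟩ := ha X hXne
    have haXn := Finset.mem_Icc.1 (hXsub haX)
    have hWX' := hF X (Finset.mem_insert_self _ _)
    rw [hWX] at hWX'
    have hspos : 0 < (s X).card :=
      Finset.card_pos.2 ⟨a X, Finset.mem_filter.2 ⟨haX, le_rfl⟩⟩
    have hsum : ∑ G ∈ insert X F, (s G).card ≤ a X := by
      rw [← Finset.card_biUnion]
      · calc ((insert X F).biUnion s).card ≤ (Finset.Icc 1 (a X)).card := by
              apply Finset.card_le_card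
              intro c hc
              obtain ⟨G, hGm, hcG⟩ := Finset.mem_biUnion.1 hc
              obtain ⟨hcG, hca⟩ := Finset.mem_filter.1 hcG
              have hc1 := Finset.mem_Icc.1 ((hsub G hGm).2 hcG)
              have haG : a G ≤ a X := by
                rcases Finset.mem_insert.1 hGm with rfl | hGF
                · exact le_rfl
                · exact hmax G hGF
              exact Finset.mem_Icc.2 ⟨hc1.1, hca.trans haG⟩
          _ = a X := by simp
      · intro G hGm H hHm hne
        exact (hdisj hGm hHm hne).mono (Finset.filter_subset _ _) (Finset.filter_subset _ _)
    rw [Finset.card_insert_of_notMem hX]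
    rw [Finset.sum_insert hX] at hsum ⊢
    set b := (s X).card + ∑ G ∈ F, (s G).card with hb
    have hclose : CV ≤ ((b - N F.card : ℕ) : ℝ) * v b := by
      refine hWX'.trans (mul_le_mul ?_ (hmono b (a X) (by omega) hsum haXn.2)
        (hnonneg _ haXn.1 haXn.2) (Nat.cast_nonneg _))
      have : (s X).card ≤ b - N F.card := by omega
      exact_mod_cast this
    have hlt : F.card < k := by
      refine lt_of_le_of_ne hk fun heq => ?_
      rw [heq] at hclose hNF
      exact absurd hclose (not_le.2 (htail b (by omega) (by omega)))
    refine ⟨hlt, ?_⟩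
    by_contra hcon
    have := (hN (F.card + 1) (by omega) hlt).2.2.2 b
    rw [Nat.add_sub_cancel] at this
    exact absurd hclose (not_le.2 (this (by omega) (by omega)))

lemma GreedyBoundaries.step_lt {v : ℕ → ℝ} {n : ℕ} {CV : ℝ} {k : ℕ} {N : ℕ → ℕ}
    (hG : GreedyBoundaries v n CV k N) : ∀ j, 1 ≤ j → j ≤ k → N (j - 1) < N j :=
  fun j h1 hj => (hG.2.1 j h1 hj).1

lemma GreedyBoundaries.le_WTP_of_mem {v : ℕ → ℝ} {n : ℕ} {CV : ℝ} {k : ℕ} {N : ℕ → ℕ}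
    (hG : GreedyBoundaries v n CV k N) {G : Finset ℕ} (h : G ∈ intervalFamily N k) :
    CV ≤ WTP v G := by
  obtain ⟨j, h1, hj, rfl⟩ := mem_intervalFamily.1 h
  obtain ⟨hlt, -, hCV, -⟩ := hG.2.1 j h1 hj
  exact hCV.trans (le_WTP_Icc v hlt le_rfl)

lemma GreedyBoundaries.nonempty_and_subset_of_mem {v : ℕ → ℝ} {n : ℕ} {CV : ℝ} {k : ℕ}
    {N : ℕ → ℕ} (hG : GreedyBoundaries v n CV k N) {G : Finset ℕ}
    (h : G ∈ intervalFamily N k) : G.Nonempty ∧ G ⊆ Finset.Icc 1 n := by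
  obtain ⟨j, h1, hj, rfl⟩ := mem_intervalFamily.1 h
  obtain ⟨hlt, hle, -, -⟩ := hG.2.1 j h1 hj
  exact ⟨Finset.nonempty_Icc.2 hlt, Finset.Icc_subset_Icc (by omega) hle⟩

/-- Two greedy runs: if every subgroup closed at threshold `CV'` is willing to pay `CV`,
then threshold `CV` closes at least as many subgroups. -/
lemma GreedyBoundaries.count_le {n : ℕ} {v : ℕ → ℝ}
    (hmono : ∀ i j, 1 ≤ i → i ≤ j → j ≤ n → v j ≤ v i)
    (hnonneg : ∀ i, 1 ≤ i → i ≤ n → 0 ≤ v i)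
    {CV CV' : ℝ} {k k' : ℕ} {N N' : ℕ → ℕ} (hG : GreedyBoundaries v n CV k N)
    (hG' : GreedyBoundaries v n CV' k' N')
    (h : ∀ G ∈ intervalFamily N' k', CV ≤ WTP v G) : k' ≤ k := by
  have := card_le_of_greedyBoundaries hmono hnonneg hG
    (fun _ => hG'.nonempty_and_subset_of_mem) (pairwiseDisjoint_intervalFamily hG'.step_lt) h
  rwa [card_intervalFamily hG'.step_lt] at this

/-- Raising the threshold to the least willingness to pay among the closed subgroups
makes it the value of an interval without losing subgroups. -/
lemma GreedyBoundaries.exists_interval_threshold {n : ℕ} {v : ℕ → ℝ}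
    {CV : ℝ} {k : ℕ} {N : ℕ → ℕ} (hG : GreedyBoundaries v n CV k N) (hk : 1 ≤ k) :
    ∃ i j, 1 ≤ i ∧ i ≤ j ∧ j ≤ n ∧ CV ≤ WTP v (Finset.Icc i j) ∧
      ∀ G ∈ intervalFamily N k, WTP v (Finset.Icc i j) ≤ WTP v G := by
  obtain ⟨G, hGm, hmin⟩ := (intervalFamily N k).exists_min_image (WTP v)
    (Finset.card_pos.1 (by rw [card_intervalFamily hG.step_lt]; exact hk))
  have hle := hG.le_WTP_of_mem hGm
  obtain ⟨j, h1, hj, rfl⟩ := mem_intervalFamily.1 hGm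
  obtain ⟨hlt, hjn, -, -⟩ := hG.2.1 j h1 hj
  exact ⟨_, _, by omega, hlt, hjn, hle, hmin⟩

/-- Merging the leftover tail into the last closed subgroup gives a continuous grouping
with total willingness to pay at least `k · CV`. -/
lemma GreedyBoundaries.merged_grouping {n : ℕ} {v : ℕ → ℝ}
    {CV : ℝ} {k : ℕ} {N : ℕ → ℕ} (hG : GreedyBoundaries v n CV k N) (hk : 1 ≤ k)
    {𝒢 : Finset (Finset ℕ)}
    (h𝒢 : 𝒢 = (Finset.Icc 1 (k - 1)).image (fun j => Finset.Icc (N (j - 1) + 1) (N j)) ∪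
      {Finset.Icc (N (k - 1) + 1) n}) :
    IsGrouping n 𝒢 ∧ ContinuousGrouping 𝒢 ∧ (k : ℝ) * CV ≤ WTPtotal v 𝒢 := by
  obtain ⟨h0, hN, -⟩ := hG
  let M := Function.update N k n
  have hMk : M k = n := Function.update_self ..
  have hMlt : ∀ j, j < k → M j = N j := fun j hj => Function.update_of_ne hj.ne _ _
  have hNM : ∀ j, j ≤ k → N j ≤ M j := by
    intro j hj
    rcases hj.lt_or_eq with h | rfl
    · exact (hMlt j h).ge
    · rw [hMk]; exact (hN j hk le_rfl).2.1
  have hM : ∀ j, 1 ≤ j → j ≤ k → M (j - 1) < M j := fun j h1 hj => by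
    rw [hMlt (j - 1) (by omega)]
    exact (hN j h1 hj).1.trans_le (hNM j hj)
  have heq : 𝒢 = intervalFamily M k := by
    have hins : Finset.Icc 1 k = Finset.Icc 1 (k - 1) ∪ {k} := by
      ext x
      simp only [Finset.mem_union, Finset.mem_Icc, Finset.mem_singleton]
      omega
    rw [h𝒢, intervalFamily, hins, Finset.image_union, Finset.image_singleton, hMk,
      hMlt (k - 1) (by omega)]
    congr 1
    refine Finset.image_congr fun j hj => ?_
    have hj' := Finset.mem_Icc.1 hj
    rw [hMlt j (by omega), hMlt (j - 1) (by omega)]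
  have hcard := card_intervalFamily hM
  refine ⟨?_, heq ▸ continuousGrouping_intervalFamily M k, ?_⟩
  · have := isGrouping_intervalFamily hM ((hMlt 0 hk).trans h0)
    rwa [hMk, ← heq] at this
  · have hle := le_WTPtotal v (𝒢 := intervalFamily M k) (CV := CV)
      (Finset.card_pos.1 (by omega)) (fun G hGm => ?_)
    · rwa [hcard, ← heq] at hle
    · obtain ⟨j, h1, hj, rfl⟩ := mem_intervalFamily.1 hGm
      rw [hMlt (j - 1) (by omega)]
      obtain ⟨hlt, -, hCV, -⟩ := hN j h1 hj
      exact hCV.trans (le_WTP_Icc v hlt (hNM j hj))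

/-- correctness of Algorithm 1: with `v_1 > 0`, there is a candidate
critical value `CV` — the WTP of some consecutive interval `{i,…,j}` — with `CV > 0`
such that, letting `k` be the number of subgroups closed by the greedy procedure with
threshold `CV`, the product `k · CV` equals `opt_WTP` (it is the greatest total
willingness to pay of any grouping, and it maximizes `k(CV') · CV'` over all positive
candidate critical values `CV'`); moreover the grouping formed by the closed greedy
subgroups with the leftover tail merged into the last one is a continuous grouping
whose total willingness to pay equals `opt_WTP`. -/
theorem stmt4 (n : ℕ) (v : ℕ → ℝ) (hn : 1 ≤ n)
    (hmono : ∀ i j, 1 ≤ i → i ≤ j → j ≤ n → v j ≤ v i)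
    (hnonneg : ∀ i, 1 ≤ i → i ≤ n → 0 ≤ v i)
    (hv1 : 0 < v 1) :
    ∃ CV : ℝ, ∃ i j : ℕ, 1 ≤ i ∧ i ≤ j ∧ j ≤ n ∧ CV = WTP v (Finset.Icc i j) ∧ 0 < CV ∧
    ∃ k : ℕ, ∃ N : ℕ → ℕ, GreedyBoundaries v n CV k N ∧ 1 ≤ k ∧
      IsGreatest {W : ℝ | ∃ 𝒢 : Finset (Finset ℕ), IsGrouping n 𝒢 ∧ WTPtotal v 𝒢 = W}
        ((k : ℝ) * CV) ∧
      (∀ (CV' : ℝ) (i' j' : ℕ), 1 ≤ i' → i' ≤ j' → j' ≤ n →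
        CV' = WTP v (Finset.Icc i' j') → 0 < CV' →
        ∀ (k' : ℕ) (N' : ℕ → ℕ), GreedyBoundaries v n CV' k' N' →
          (k' : ℝ) * CV' ≤ (k : ℝ) * CV) ∧
      (∃ 𝒢 : Finset (Finset ℕ),
        𝒢 = (Finset.Icc 1 (k - 1)).image (fun j => Finset.Icc (N (j - 1) + 1) (N j)) ∪
              {Finset.Icc (N (k - 1) + 1) n} ∧
        IsGrouping n 𝒢 ∧ ContinuousGrouping 𝒢 ∧ WTPtotal v 𝒢 = (k : ℝ) * CV) := by
  choose K B hB using exists_greedyBoundaries v n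
  have hv1W : v 1 ≤ WTP v (Finset.Icc 1 1) := by
    simpa using le_WTP_Icc v (p := 0) (c := 1) (q := 1) one_pos le_rfl
  have hv1pos : 0 < WTP v (Finset.Icc 1 1) := hv1.trans_le hv1W
  let T := (Finset.Icc 1 n ×ˢ Finset.Icc 1 n).filter
    (fun p => p.1 ≤ p.2 ∧ 0 < WTP v (Finset.Icc p.1 p.2))
  have hT : ∀ i j, (i, j) ∈ T ↔ 1 ≤ i ∧ i ≤ j ∧ j ≤ n ∧ 0 < WTP v (Finset.Icc i j) := by
    intro i j
    simp only [T, Finset.mem_filter, Finset.mem_product, Finset.mem_Icc]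
    constructor
    · rintro ⟨⟨⟨h1, h2⟩, h3, h4⟩, h5, h6⟩
      exact ⟨h1, h5, h4, h6⟩
    · rintro ⟨h1, h2, h3, h4⟩
      exact ⟨⟨⟨h1, h2.trans h3⟩, h1.trans h2, h3⟩, h2, h4⟩
  obtain ⟨⟨i, j⟩, hij, hmax⟩ := T.exists_max_image
    (fun p => (K (WTP v (Finset.Icc p.1 p.2)) : ℝ) * WTP v (Finset.Icc p.1 p.2))
    ⟨(1, 1), (hT 1 1).2 ⟨le_rfl, le_rfl, hn, hv1pos⟩⟩
  obtain ⟨hi, hij', hj, hpos⟩ := (hT i j).1 hij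
  set CV := WTP v (Finset.Icc i j) with hCV
  have hcand : ∀ i' j', 1 ≤ i' → i' ≤ j' → j' ≤ n → 0 < WTP v (Finset.Icc i' j') →
      (K (WTP v (Finset.Icc i' j')) : ℝ) * WTP v (Finset.Icc i' j') ≤ K CV * CV :=
    fun i' j' h1 h2 h3 h4 => hmax (i', j') ((hT i' j').2 ⟨h1, h2, h3, h4⟩)
  have hthreshold : ∀ W, 0 < W → (K W : ℝ) * W ≤ K CV * CV := by
    intro W hW
    rcases Nat.eq_zero_or_pos (K W) with h | h
    · rw [h, Nat.cast_zero, zero_mul]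
      positivity
    · obtain ⟨i', j', h1, h2, h3, hle, hall⟩ := (hB W).exists_interval_threshold h
      have hcount := (hB (WTP v (Finset.Icc i' j'))).count_le hmono hnonneg (hB W) hall
      refine le_trans ?_ (hcand i' j' h1 h2 h3 (hW.trans_le hle))
      gcongr
  have hk : 1 ≤ K CV := by
    have h1 : K (v 1) ≠ 0 := by
      intro h
      obtain ⟨h0, -, htail⟩ := hB (v 1)
      have := htail 1 (by rw [h, h0]; exact one_pos) hn
      rw [h, h0] at this
      simp at this
    have h2 : (0 : ℝ) < K (v 1) * v 1 := by positivity
    have h3 := h2.trans_le (hthreshold (v 1) hv1)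
    rcases Nat.eq_zero_or_pos (K CV) with h | h
    · rw [h, Nat.cast_zero, zero_mul] at h3
      exact absurd h3 (lt_irrefl _)
    · exact h
  have hupper : ∀ 𝒢, IsGrouping n 𝒢 → WTPtotal v 𝒢 ≤ K CV * CV := by
    rintro 𝒢 ⟨hne, hdisj, hsup⟩
    have h𝒢 : 𝒢.Nonempty := by
      rw [Finset.nonempty_iff_ne_empty]
      rintro rfl
      have h1 : 1 ∈ Finset.Icc 1 n := Finset.mem_Icc.2 ⟨le_rfl, hn⟩
      rw [← hsup] at h1
      simp at h1
    obtain ⟨G, hG, heq⟩ := exists_WTPtotal_eq v h𝒢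
    rw [heq]
    rcases le_or_gt (WTP v G) 0 with hW | hW
    · exact (mul_nonpos_of_nonneg_of_nonpos (Nat.cast_nonneg _) hW).trans (by positivity)
    · refine le_trans ?_ (hthreshold _ hW)
      have hcard := card_le_of_greedyBoundaries hmono hnonneg (hB (WTP v G))
        (F := 𝒢.filter (fun G' => WTP v G ≤ WTP v G'))
        (fun G' hG' => ⟨hne G' (Finset.mem_filter.1 hG').1,
          hsup ▸ Finset.le_sup (f := id) (Finset.mem_filter.1 hG').1⟩)
        (hdisj.subset (Finset.coe_subset.2 (Finset.filter_subset _ _)))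
        (fun G' hG' => (Finset.mem_filter.1 hG').2)
      gcongr
  obtain ⟨hgrouping, hcont, hlower⟩ := (hB CV).merged_grouping hk rfl
  have htotal := le_antisymm (hupper _ hgrouping) hlower
  refine ⟨CV, i, j, hi, hij', hj, hCV, hpos, K CV, B CV, hB CV, hk, ⟨⟨_, hgrouping, htotal⟩, ?_⟩,
    ?_, _, rfl, hgrouping, hcont, htotal⟩
  · rintro W ⟨𝒢, h𝒢, rfl⟩
    exact hupper 𝒢 h𝒢
  · intro CV' i' j' h1 h2 h3 hCV' hpos' k' N' hG'
    refine le_trans ?_ (hthreshold CV' hpos')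
    have := (hB CV').count_le hmono hnonneg hG' (fun _ => hG'.le_WTP_of_mem)
    gcongr

end
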